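/- arXiv:1610.02680 — 2 statements merged into one kernel-verified Lean document; each statement's English description precedes it below -/
import Mathlib

section
/- Let A > 0 and define E1(x) = ∫_x^∞ e^{−z}/z dz for x > 0, and g(R) = e^{1/A}·E1(1/A) − e^{1/R}·E1(1/R) for R > 0. Then g is twice differentiable on (0,∞), satisfies the ordinary differential equation (2R + 1)·g′(R) + R²·g″(R) = −1 for every R > 0, and g(A) = 0. -/
open MeasureTheory Real Set

/-- The exponential integral `E1 x = ∫_x^∞ e^{-z}/z dz`. -/
noncomputable def E1 (x : ℝ) : ℝ := ∫ z in Set.Ioi x, Real.exp (-z) / z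

/-!
The function `h(R) = e^{1/R} E1(1/R)` satisfies the first-order linear equation `R² h' + h = R`,
because the derivative of `E1` is `-e^{-x}/x` and the exponentials cancel. Hence `g = c - h`, with
`c = h(A)`, satisfies `R² g' + g = c - R`, and differentiating this relation once gives the
second-order equation, in which `c` no longer appears.
-/

open scoped Topology

section TailIntegral

variable {E : Type*} [NormedAddCommGroup E] [NormedSpace ℝ E] [CompleteSpace E]

theorem hasDerivAt_integral_Ioi {f : ℝ → E} {a x : ℝ} (hf : IntegrableOn f (Ioi a))
    (hax : a < x) (hfx : ContinuousAt f x) :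
    HasDerivAt (fun u ↦ ∫ z in Ioi u, f z) (-f x) x := by
  have hint : IntervalIntegrable f volume a x :=
    (intervalIntegrable_iff_integrableOn_Ioc_of_le hax.le).2 (hf.mono_set Ioc_subset_Ioi_self)
  have hmeas : StronglyMeasurableAtFilter f (𝓝 x) :=
    ⟨Ioi a, Ioi_mem_nhds hax, hf.aestronglyMeasurable⟩
  have hsplit : (fun u ↦ ∫ z in Ioi u, f z) =ᶠ[𝓝 x]
      fun u ↦ (∫ z in Ioi a, f z) - ∫ z in a..u, f z := by
    filter_upwards [lt_mem_nhds hax] with u hu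
    rw [← intervalIntegral.integral_Ioi_sub_Ioi hf hu.le, sub_sub_cancel]
  have hftc := intervalIntegral.integral_hasDerivAt_right hint hmeas hfx
  exact (hftc.const_sub _).congr_of_eventuallyEq hsplit

end TailIntegral

section LinearODE

variable {𝕜 : Type*} [NontriviallyNormedField 𝕜]

-- The hypothesis on `y` is the equation `a y' + y = b` near `x`, solved for `y'`.
theorem hasDerivAt_deriv_of_linear_ode {y a b : 𝕜 → 𝕜} {x a' b' : 𝕜}
    (hy : ∀ᶠ t in 𝓝 x, HasDerivAt y ((b t - y t) / a t) t)
    (ha : HasDerivAt a a' x) (hb : HasDerivAt b b' x) (hax : a x ≠ 0) :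
    HasDerivAt (deriv y) ((b' - (1 + a') * deriv y x) / a x) x := by
  have hderiv : deriv y =ᶠ[𝓝 x] fun t ↦ (b t - y t) / a t := hy.mono fun t ht ↦ ht.deriv
  have hquot := ((hb.sub hy.self_of_nhds).div ha hax).congr_of_eventuallyEq hderiv
  refine hquot.congr_deriv ?_
  rw [hderiv.eq_of_nhds, Pi.sub_apply]
  field_simp
  ring

end LinearODE

theorem integrableOn_exp_neg_div_Ioi {c : ℝ} (hc : 0 < c) :
    IntegrableOn (fun z ↦ exp (-z) / z) (Ioi c) := by
  have hbound : ∀ᵐ z ∂volume.restrict (Ioi c), ‖z⁻¹‖ ≤ c⁻¹ := by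
    filter_upwards [ae_restrict_mem measurableSet_Ioi] with z (hz : c < z)
    rw [norm_of_nonneg (inv_nonneg.2 (hc.trans hz).le)]
    exact inv_anti₀ hc hz.le
  exact (integrableOn_exp_neg_Ioi c).mul_bdd measurable_inv.aestronglyMeasurable hbound

theorem hasDerivAt_E1 {x : ℝ} (hx : 0 < x) : HasDerivAt E1 (-(exp (-x) / x)) x :=
  hasDerivAt_integral_Ioi (integrableOn_exp_neg_div_Ioi (half_pos hx)) (half_lt_self hx)
    (by fun_prop (disch := exact hx.ne'))

/-- The scaled exponential integral `e^x E1(x)`, in terms of which the function `g` of the theorem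
is `g(R) = scaledE1 (1 / A) - scaledE1 (1 / R)`. -/
noncomputable def scaledE1 (x : ℝ) : ℝ := exp x * E1 x

theorem hasDerivAt_scaledE1 {x : ℝ} (hx : 0 < x) :
    HasDerivAt scaledE1 (scaledE1 x - 1 / x) x := by
  refine ((hasDerivAt_exp x).mul (hasDerivAt_E1 hx)).congr_deriv ?_
  rw [mul_neg, ← mul_div_assoc, ← exp_add, add_neg_cancel, exp_zero, ← sub_eq_add_neg, scaledE1]

theorem hasDerivAt_scaledE1_one_div {R : ℝ} (hR : 0 < R) :
    HasDerivAt (fun r ↦ scaledE1 (1 / r)) ((R - scaledE1 (1 / R)) / R ^ 2) R := by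
  have hinv : HasDerivAt (fun r : ℝ ↦ 1 / r) (-(R ^ 2)⁻¹) R := by
    simpa only [one_div] using hasDerivAt_inv hR.ne'
  refine ((hasDerivAt_scaledE1 (one_div_pos.2 hR)).comp R hinv).congr_deriv ?_
  rw [one_div_one_div]
  ring

/-- For a threshold `A > 0`, the function
`g(R) = e^{1/A} E1(1/A) - e^{1/R} E1(1/R)` is twice differentiable on `(0,∞)`,
solves the ODE `(2R+1) g'(R) + R² g''(R) = -1` there, and satisfies `g(A) = 0`. -/
theorem statement0 (A : ℝ) (hA : 0 < A) (g : ℝ → ℝ)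
    (hg : ∀ R : ℝ, g R = Real.exp (1 / A) * E1 (1 / A) - Real.exp (1 / R) * E1 (1 / R)) :
    (∀ R : ℝ, 0 < R → DifferentiableAt ℝ g R) ∧
    (∀ R : ℝ, 0 < R → DifferentiableAt ℝ (deriv g) R) ∧
    (∀ R : ℝ, 0 < R → (2 * R + 1) * deriv g R + R ^ 2 * deriv (deriv g) R = -1) ∧
    g A = 0 := by
  have hasDerivAt_g (R : ℝ) (hR : 0 < R) :
      HasDerivAt g ((scaledE1 (1 / A) - R - g R) / R ^ 2) R := by
    rw [show g = fun r ↦ scaledE1 (1 / A) - scaledE1 (1 / r) from funext hg]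
    exact ((hasDerivAt_scaledE1_one_div hR).const_sub _).congr_deriv (by ring)
  have hasDerivAt_deriv_g (R : ℝ) (hR : 0 < R) :
      HasDerivAt (deriv g) ((-1 - (1 + 2 * R) * deriv g R) / R ^ 2) R :=
    hasDerivAt_deriv_of_linear_ode (a := fun r ↦ r ^ 2) ((lt_mem_nhds hR).mono hasDerivAt_g)
      (by simpa using hasDerivAt_pow 2 R) ((hasDerivAt_id' R).const_sub _) (pow_ne_zero 2 hR.ne')
  refine ⟨fun R hR ↦ (hasDerivAt_g R hR).differentiableAt,
    fun R hR ↦ (hasDerivAt_deriv_g R hR).differentiableAt, fun R hR ↦ ?_, by rw [hg, sub_self]⟩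
  rw [(hasDerivAt_deriv_g R hR).deriv, mul_div_cancel₀ _ (pow_ne_zero 2 hR.ne')]
  ring
end

section
/- Let r > 0 be fixed and define E1(x) = ∫_x^∞ e^{−z}/z dz for x > 0. Then (1/γ)·∫_{1/(r+γ)}^{1/r} E1(x)·(e^x/x) dx → 0 as γ → ∞. Consequently, with f_0^{(γ)}(r) = −γ·(1 − e^{1/r}·E1(1/r)) + ∫_{1/(r+γ)}^{1/r} E1(x)·(e^x/x) dx, one has f_0^{(γ)}(r)/γ → −(1 − e^{1/r}·E1(1/r)) as γ → ∞. -/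
/-!
Write `e^{-z} / z = e^{-z} z^{s-1} · z^{-s}` with `s > 0`. On `z > x` the last factor is at most
`x^{-s}`, so `E1(x) ≤ Γ(s) x^{-s}`, and therefore `∫_a^b E1(x) e^x / x dx = O(a^{-s})` as `a → 0⁺`.
Any exponent `s < 1` makes this `o(a⁻¹)`, which for `a = 1 / (r + γ)` is `o(γ)`.
-/

open MeasureTheory Real Set Filter

open Asymptotics Topology

lemma integral_rpow_neg_sub_one_le {s a b : ℝ} (hs : 0 < s) (ha : 0 < a) (hb : 0 < b) :
    ∫ x in a..b, x ^ (-s - 1) ≤ a ^ (-s) / s := by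
  have h_ne : -s - 1 ≠ -1 := by linarith
  calc ∫ x in a..b, x ^ (-s - 1) = (a ^ (-s) - b ^ (-s)) / s := by
        rw [integral_rpow (Or.inr ⟨h_ne, notMem_uIcc_of_lt ha hb⟩), sub_add_cancel, div_neg,
          ← neg_div, neg_sub]
    _ ≤ a ^ (-s) / s := by
        gcongr
        exact sub_le_self _ (rpow_nonneg hb.le _)

lemma isLittleO_rpow_rpow_nhdsGT_zero {p q : ℝ} (hqp : q < p) :
    (fun x : ℝ => x ^ p) =o[𝓝[>] 0] fun x => x ^ q := by
  have h_lim : Tendsto (fun x : ℝ => x ^ (p - q)) (𝓝[>] 0) (𝓝 0) := by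
    simpa only [zero_rpow (sub_pos.2 hqp).ne'] using
      (continuousAt_rpow_const 0 (p - q) (Or.inr (sub_nonneg.2 hqp.le))).tendsto.mono_left
        nhdsWithin_le_nhds
  have h_ne : ∀ᶠ x : ℝ in 𝓝[>] 0, x ^ q = 0 → x ^ p = 0 := by
    filter_upwards [self_mem_nhdsWithin] with x hx h
    exact absurd h (rpow_pos_of_pos hx q).ne'
  refine (isLittleO_iff_tendsto' h_ne).2 (h_lim.congr' ?_)
  filter_upwards [self_mem_nhdsWithin] with x hx
  exact rpow_sub hx p q

lemma tendsto_one_div_const_add_nhdsGT_zero (r : ℝ) :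
    Tendsto (fun γ : ℝ => 1 / (r + γ)) atTop (𝓝[>] 0) := by
  simpa only [one_div, Function.comp_def, id_eq] using
    tendsto_inv_atTop_nhdsGT_zero.comp (tendsto_atTop_add_const_left atTop r tendsto_id)

lemma setIntegral_Ioi_exp_neg_mul_rpow_le_Gamma {s x : ℝ} (hs : 0 < s) (hx : 0 ≤ x) :
    ∫ z in Ioi x, exp (-z) * z ^ (s - 1) ≤ Gamma s := by
  rw [Gamma_eq_integral hs]
  refine setIntegral_mono_set (GammaIntegral_convergent hs) ?_ (Ioi_subset_Ioi hx).eventuallyLE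
  filter_upwards [ae_restrict_mem measurableSet_Ioi] with z hz
  exact mul_nonneg (exp_nonneg (-z)) (rpow_nonneg (le_of_lt hz) _)

lemma exp_neg_div_le_mul_rpow_neg {s x z : ℝ} (hs : 0 ≤ s) (hx : 0 < x) (hxz : x ≤ z) :
    exp (-z) / z ≤ exp (-z) * z ^ (s - 1) * x ^ (-s) := by
  have hz : 0 < z := hx.trans_le hxz
  calc exp (-z) / z = exp (-z) * z ^ (s - 1) * z ^ (-s) := by
        rw [div_eq_mul_inv, mul_assoc, ← rpow_add hz, ← rpow_neg_one]
        ring_nf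
    _ ≤ exp (-z) * z ^ (s - 1) * x ^ (-s) := by
        gcongr ?_ * ?_
        exact rpow_le_rpow_of_nonpos hx hxz (neg_nonpos.2 hs)

lemma E1_nonneg {x : ℝ} (hx : 0 ≤ x) : 0 ≤ E1 x :=
  setIntegral_nonneg measurableSet_Ioi fun z hz =>
    div_nonneg (exp_nonneg (-z)) (hx.trans (le_of_lt hz))

lemma E1_le_Gamma_mul_rpow_neg {s x : ℝ} (hs : 0 < s) (hx : 0 < x) :
    E1 x ≤ Gamma s * x ^ (-s) := by
  have h_int : IntegrableOn (fun z => exp (-z) * z ^ (s - 1)) (Ioi x) :=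
    (GammaIntegral_convergent hs).mono_set (Ioi_subset_Ioi hx.le)
  calc E1 x ≤ ∫ z in Ioi x, exp (-z) * z ^ (s - 1) * x ^ (-s) := by
        refine integral_mono_of_nonneg ?_ (h_int.mul_const _) ?_ <;>
          filter_upwards [ae_restrict_mem measurableSet_Ioi] with z hz
        · exact div_nonneg (exp_nonneg (-z)) (hx.trans hz).le
        · exact exp_neg_div_le_mul_rpow_neg hs.le hx (le_of_lt hz)
    _ = (∫ z in Ioi x, exp (-z) * z ^ (s - 1)) * x ^ (-s) := integral_mul_const _ _
    _ ≤ Gamma s * x ^ (-s) := by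
        gcongr
        exact setIntegral_Ioi_exp_neg_mul_rpow_le_Gamma hs hx.le

lemma norm_E1_mul_exp_div_le {s x b : ℝ} (hs : 0 < s) (hx : 0 < x) (hxb : x ≤ b) :
    ‖E1 x * (exp x / x)‖ ≤ Gamma s * exp b * x ^ (-s - 1) := by
  have hE1 : 0 ≤ E1 x := E1_nonneg hx.le
  rw [norm_of_nonneg (by positivity)]
  calc E1 x * (exp x / x) ≤ Gamma s * x ^ (-s) * (exp b / x) := by
        gcongr
        exact E1_le_Gamma_mul_rpow_neg hs hx
    _ = Gamma s * exp b * x ^ (-s - 1) := by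
        rw [rpow_sub_one hx.ne']
        ring

lemma norm_integral_E1_mul_exp_div_le {s a b : ℝ} (hs : 0 < s) (ha : 0 < a) (hab : a ≤ b) :
    ‖∫ x in a..b, E1 x * (exp x / x)‖ ≤ Gamma s * exp b / s * a ^ (-s) := by
  have hb : 0 < b := ha.trans_le hab
  have h_int : IntervalIntegrable (fun x : ℝ => x ^ (-s - 1)) volume a b :=
    intervalIntegral.intervalIntegrable_rpow (Or.inr (notMem_uIcc_of_lt ha hb))
  have h_bound : ∀ x ∈ Ioc a b, ‖E1 x * (exp x / x)‖ ≤ Gamma s * exp b * x ^ (-s - 1) :=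
    fun x hx => norm_E1_mul_exp_div_le hs (ha.trans hx.1) hx.2
  calc ‖∫ x in a..b, E1 x * (exp x / x)‖
      ≤ ∫ x in a..b, Gamma s * exp b * x ^ (-s - 1) :=
        intervalIntegral.norm_integral_le_of_norm_le hab (Eventually.of_forall h_bound)
          (h_int.const_mul _)
    _ = Gamma s * exp b * ∫ x in a..b, x ^ (-s - 1) := intervalIntegral.integral_const_mul _ _
    _ ≤ Gamma s * exp b * (a ^ (-s) / s) := by
        gcongr
        exact integral_rpow_neg_sub_one_le hs ha hb
    _ = Gamma s * exp b / s * a ^ (-s) := by ring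

lemma isBigO_integral_E1_mul_exp_div {s b : ℝ} (hs : 0 < s) (hb : 0 < b) :
    (fun a => ∫ x in a..b, E1 x * (exp x / x)) =O[𝓝[>] 0] fun a => a ^ (-s) := by
  refine IsBigO.of_bound (Gamma s * exp b / s) ?_
  filter_upwards [Ioc_mem_nhdsGT hb] with a ⟨ha, hab⟩
  rw [norm_of_nonneg (rpow_nonneg ha.le _)]
  exact norm_integral_E1_mul_exp_div_le hs ha hab

lemma isLittleO_integral_E1_mul_exp_div_inv_nhdsGT_zero {b : ℝ} (hb : 0 < b) :
    (fun a => ∫ x in a..b, E1 x * (exp x / x)) =o[𝓝[>] 0] fun a => a⁻¹ := by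
  simp only [← rpow_neg_one]
  exact (isBigO_integral_E1_mul_exp_div one_half_pos hb).trans_isLittleO
    (isLittleO_rpow_rpow_nhdsGT_zero (by norm_num))

lemma isLittleO_integral_E1_mul_exp_div_id_atTop (r : ℝ) {b : ℝ} (hb : 0 < b) :
    (fun γ => ∫ x in (1 / (r + γ))..b, E1 x * (exp x / x)) =o[atTop] fun γ => γ := by
  have h_comp : (fun γ => ∫ x in (1 / (r + γ))..b, E1 x * (exp x / x)) =o[atTop]
      fun γ => r + γ := by
    simpa only [Function.comp_def, one_div, inv_inv] using
      (isLittleO_integral_E1_mul_exp_div_inv_nhdsGT_zero hb).comp_tendsto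
        (tendsto_one_div_const_add_nhdsGT_zero r)
  exact h_comp.trans_isBigO ((isLittleO_const_id_atTop r).isBigO.add (isBigO_refl _ _))

/-- Asymptotics of the equation (eq:det-rstar-final) of the paper: for fixed
`r > 0`, `(1/γ) ∫_{1/(r+γ)}^{1/r} E1(x) e^x/x dx → 0` as `γ → ∞`, and hence
`f_0^{(γ)}(r)/γ → -(1 - e^{1/r} E1(1/r))`. -/
theorem statement13 (r : ℝ) (hr : 0 < r) :
    Tendsto (fun γ : ℝ =>
        (1 / γ) * ∫ x in (1 / (r + γ))..(1 / r), E1 x * (Real.exp x / x))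
      atTop (nhds 0) ∧
    Tendsto (fun γ : ℝ =>
        (-γ * (1 - Real.exp (1 / r) * E1 (1 / r)) +
          ∫ x in (1 / (r + γ))..(1 / r), E1 x * (Real.exp x / x)) / γ)
      atTop (nhds (-(1 - Real.exp (1 / r) * E1 (1 / r)))) := by
  have h_mean : Tendsto (fun γ : ℝ =>
      (1 / γ) * ∫ x in (1 / (r + γ))..(1 / r), E1 x * (exp x / x)) atTop (𝓝 0) := by
    simpa only [one_div_mul_eq_div] using
      (isLittleO_integral_E1_mul_exp_div_id_atTop r (one_div_pos.2 hr)).tendsto_div_nhds_zero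
  refine ⟨h_mean, ?_⟩
  have h_shift := h_mean.const_add (-(1 - exp (1 / r) * E1 (1 / r)))
  rw [add_zero] at h_shift
  refine h_shift.congr' ?_
  filter_upwards [eventually_ne_atTop 0] with γ hγ
  field_simp
end
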